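/- (Lemma 3.2, inequality (3.2)) Let (D, F) be a good pair, X ⊆ ℝⁿ convex compact, A affine with A(X) ⊆ M, g ∈ ℝⁿ, and define 2Φ_*(r) = sup_{x,y∈X} inf_{φ∈F, α>0} Φ_r(x, y; φ, α). Then for every δ ∈ (0, 1), the minimax optimal risk satisfies Risk_*(δ²/4) ≥ Φ_*(ln(1/δ)). -/

import Mathlib

open MeasureTheory Real Matrix Set
open scoped ENNReal

/-- A "good pair" `(𝒟, ℱ)` in the sense of Juditsky–Nemirovski:
a parametric family of positive probability densities `p μ`, `μ ∈ M`, on `(Ω, P)`,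
together with a finite-dimensional linear space `F` of Borel functions on `Ω`
containing the constants, such that log-likelihood ratios belong to `F` and
`μ ↦ ln ∫ e^{φ} p_μ dP` is well defined (finite, witnessed by integrability)
and concave on `M` for every `φ ∈ F`. -/
structure GoodPair (Ω : Type*) [MeasurableSpace Ω] (P : Measure Ω)
    (E : Type*) [NormedAddCommGroup E] [NormedSpace ℝ E] where
  M : Set E
  p : E → Ω → ℝ
  F : Submodule ℝ (Ω → ℝ)
  M_open : IsOpen M
  M_convex : Convex ℝ M
  p_meas : ∀ μ ∈ M, Measurable (p μ)
  p_pos : ∀ μ ∈ M, ∀ ω, 0 < p μ ω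
  p_prob : ∀ μ ∈ M, ∫ ω, p μ ω ∂P = 1
  F_fd : FiniteDimensional ℝ F
  F_meas : ∀ φ ∈ F, Measurable φ
  F_const : ∀ c : ℝ, (fun _ : Ω => c) ∈ F
  logratio_mem : ∀ μ ∈ M, ∀ ν ∈ M, (fun ω => Real.log (p μ ω / p ν ω)) ∈ F
  F_finite : ∀ φ ∈ F, ∀ μ ∈ M, Integrable (fun ω => Real.exp (φ ω) * p μ ω) P
  F_concave : ∀ φ ∈ F,
    ConcaveOn ℝ M (fun μ => Real.log (∫ ω, Real.exp (φ ω) * p μ ω ∂P))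

variable {Ω : Type*} [MeasurableSpace Ω] {P : Measure Ω}
  {E : Type*} [NormedAddCommGroup E] [NormedSpace ℝ E] {n : ℕ}

/-- The distribution of the observation when the parameter is `μ`:
the measure with density `p μ` with respect to `P`. -/
noncomputable def obsMeasure (D : GoodPair Ω P E) (μ : E) : Measure Ω :=
  P.withDensity fun ω => ENNReal.ofReal (D.p μ ω)

/-- The `ε`-risk of an estimate `ghat` of the linear form `gᵀx`, `x ∈ X`:
`inf {δ | sup_{x ∈ X} Prob_{ω ∼ p_{A(x)}·P} {|ghat ω - gᵀx| > δ} < ε}`. -/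
noncomputable def Risk (D : GoodPair Ω P E) (A : (Fin n → ℝ) →ᵃ[ℝ] E)
    (g : Fin n → ℝ) (X : Set (Fin n → ℝ)) (ghat : Ω → ℝ) (ε : ℝ) : ℝ :=
  sInf {δ : ℝ |
    (⨆ x ∈ X, obsMeasure D (A x) {ω | δ < |ghat ω - g ⬝ᵥ x|}) < ENNReal.ofReal ε}

/-- The minimax optimal `ε`-risk over all (Borel) estimates. -/
noncomputable def RiskStar (D : GoodPair Ω P E) (A : (Fin n → ℝ) →ᵃ[ℝ] E)
    (g : Fin n → ℝ) (X : Set (Fin n → ℝ)) (ε : ℝ) : ℝ :=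
  sInf {ρ : ℝ | ∃ ghat : Ω → ℝ, Measurable ghat ∧ ρ = Risk D A g X ghat ε}

/-- The minimax optimal `ε`-risk over affine estimates, i.e. estimates `φ ∈ F`. -/
noncomputable def RiskAff (D : GoodPair Ω P E) (A : (Fin n → ℝ) →ᵃ[ℝ] E)
    (g : Fin n → ℝ) (X : Set (Fin n → ℝ)) (ε : ℝ) : ℝ :=
  sInf {ρ : ℝ | ∃ φ ∈ D.F, ρ = Risk D A g X φ ε}

/-- The function `Φ_r(x, y; φ, α)`. -/
noncomputable def PhiFun (D : GoodPair Ω P E) (A : (Fin n → ℝ) →ᵃ[ℝ] E)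
    (g : Fin n → ℝ) (r : ℝ) (x y : Fin n → ℝ) (φ : Ω → ℝ) (α : ℝ) : ℝ :=
  g ⬝ᵥ x - g ⬝ᵥ y
    + α * Real.log (∫ ω, Real.exp (φ ω / α) * D.p (A y) ω ∂P)
    + α * Real.log (∫ ω, Real.exp (-φ ω / α) * D.p (A x) ω ∂P)
    + 2 * α * r

/-- `Φ_*(r)` defined through the sup-inf value:
`2Φ_*(r) = sup_{x,y ∈ X} inf_{φ ∈ F, α > 0} Φ_r(x, y; φ, α)`. -/
noncomputable def PhiStarSI (D : GoodPair Ω P E) (A : (Fin n → ℝ) →ᵃ[ℝ] E)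
    (g : Fin n → ℝ) (X : Set (Fin n → ℝ)) (r : ℝ) : ℝ :=
  (1/2) * sSup {v : ℝ | ∃ x ∈ X, ∃ y ∈ X,
    v = sInf {w : ℝ | ∃ φ ∈ D.F, ∃ α : ℝ, 0 < α ∧ w = PhiFun D A g r x y φ α}}

/-- `Φ_*(r)` defined through the inf-sup value:
`2Φ_*(r) = inf_{φ ∈ F, α > 0} sup_{x,y ∈ X} Φ_r(x, y; φ, α)`. -/
noncomputable def PhiStarIS (D : GoodPair Ω P E) (A : (Fin n → ℝ) →ᵃ[ℝ] E)
    (g : Fin n → ℝ) (X : Set (Fin n → ℝ)) (r : ℝ) : ℝ :=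
  (1/2) * sInf {v : ℝ | ∃ φ ∈ D.F, ∃ α : ℝ, 0 < α ∧
    v = sSup {w : ℝ | ∃ x ∈ X, ∃ y ∈ X, w = PhiFun D A g r x y φ α}}

/-!
For fixed `α` the infimum of `Φ_r(x, y; φ, α)` over `φ ∈ F` is attained at a multiple of the
log-likelihood ratio, by Cauchy–Schwarz, and equals `gᵀx - gᵀy + 2α (ln ρ(x, y) + r)`, where `ρ` is
the Hellinger affinity `∫ √(p_{A(x)} p_{A(y)}) dP`. With `r = ln (1/δ)`, the infimum over `α` is
thus `gᵀx - gᵀy` if `ρ(x, y) ≥ δ` and `-∞` otherwise. In the first case Le Cam's two-point argument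
applies: an estimate whose error is at most `t < (gᵀx - gᵀy)/2` with probability above `1 - δ²/4`
would separate `x` from `y` and force `ρ(x, y) < δ/2 + δ/2`.

The infimum defining the risk of an estimate has to be taken over a nonempty set. The function
`ln ρ(·, y)` is concave, so `ρ` is continuous; hence the laws of an estimate are uniformly tight
over the compact set `X`.
-/

section RealLemmas

open Filter Topology

theorem exp_half_log_div_mul {a b : ℝ} (ha : 0 < a) (hb : 0 < b) :
    exp (log (b / a) / 2) * a = √(a * b) := by
  have hba := div_pos hb ha
  calc exp (log (b / a) / 2) * a = √(b / a) * √(a ^ 2) := by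
        rw [← log_sqrt hba.le, exp_log (sqrt_pos.2 hba), sqrt_sq ha.le]
    _ = √(a * b) := by
        rw [← sqrt_mul hba.le]
        congr 1
        field_simp

theorem isGLB_image_add_mul_Ioi {c k : ℝ} (hk : 0 ≤ k) :
    IsGLB ((fun α : ℝ => c + α * k) '' Ioi 0) c := by
  have hmono : Monotone fun α : ℝ => c + α * k := fun α β hαβ => by
    dsimp only
    gcongr
  have hlim : Tendsto (fun α : ℝ => c + α * k) (𝓝 0) (𝓝 c) := by
    have hcont : Continuous fun α : ℝ => c + α * k := by fun_prop
    simpa using hcont.tendsto 0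
  exact isGLB_Ioi.isGLB_of_tendsto (hmono.monotoneOn _) nonempty_Ioi
    (hlim.mono_left nhdsWithin_le_nhds)

theorem not_bddBelow_image_add_mul_Ioi (c : ℝ) {k : ℝ} (hk : k < 0) :
    ¬BddBelow ((fun α : ℝ => c + α * k) '' Ioi 0) := by
  rintro ⟨b, hb⟩
  have hlim : Tendsto (fun α : ℝ => c + α * k) atTop atBot :=
    tendsto_atBot_add_const_left _ c (tendsto_id.atTop_mul_const_of_neg hk)
  obtain ⟨α, hαb, hα⟩ := ((hlim.eventually_lt_atBot b).and (eventually_gt_atTop 0)).exists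
  exact hαb.not_ge (hb ⟨α, hα, rfl⟩)

end RealLemmas

section HellingerAffinity

open Filter Topology

variable {p q f h : Ω → ℝ} {B : Set Ω} {a b δ ε t : ℝ}

/-- The function `p` is a probability density with respect to the measure `P`. -/
structure IsProbDensity (P : Measure Ω) (p : Ω → ℝ) : Prop where
  nonneg : 0 ≤ᵐ[P] p
  integral_eq_one : ∫ ω, p ω ∂P = 1

/-- The Hellinger affinity (Bhattacharyya coefficient) `∫ √(p q) dP` of two densities with respect
to `P`. It measures how hard it is to tell `p` and `q` apart. -/
noncomputable def hellingerAffinity (P : Measure Ω) (p q : Ω → ℝ) : ℝ := ∫ ω, √(p ω * q ω) ∂P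

theorem IsProbDensity.integrable (hp : IsProbDensity P p) : Integrable p P :=
  .of_integral_ne_zero (hp.integral_eq_one.trans_ne one_ne_zero)

theorem IsProbDensity.setIntegral_compl (hp : IsProbDensity P p) (hB : MeasurableSet B) :
    ∫ ω in Bᶜ, p ω ∂P = 1 - ∫ ω in B, p ω ∂P := by
  rw [MeasureTheory.setIntegral_compl hB hp.integrable, hp.integral_eq_one]

theorem IsProbDensity.setIntegral_le_one (hp : IsProbDensity P p) : ∫ ω in B, p ω ∂P ≤ 1 :=
  (setIntegral_le_integral hp.integrable hp.nonneg).trans_eq hp.integral_eq_one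

theorem memLp_two_sqrt (hf : Integrable f P) : MemLp (fun ω => √(f ω)) 2 P := by
  rw [memLp_two_iff_integrable_sq (continuous_sqrt.comp_aestronglyMeasurable hf.1)]
  simpa only [sq_sqrt'] using hf.pos_part

theorem sqrt_mul_ae_eq (hf₀ : 0 ≤ᵐ[P] f) :
    (fun ω => √(f ω * h ω)) =ᵐ[P] fun ω => √(f ω) * √(h ω) :=
  hf₀.mono fun ω hω => sqrt_mul hω (h ω)

theorem integrable_sqrt_mul (hf : Integrable f P) (hh : Integrable h P) (hf₀ : 0 ≤ᵐ[P] f) :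
    Integrable (fun ω => √(f ω * h ω)) P :=
  ((memLp_two_sqrt hf).integrable_mul (memLp_two_sqrt hh)).congr (sqrt_mul_ae_eq hf₀).symm

theorem integral_sqrt_mul_le (hf : Integrable f P) (hh : Integrable h P)
    (hf₀ : 0 ≤ᵐ[P] f) (hh₀ : 0 ≤ᵐ[P] h) :
    ∫ ω, √(f ω * h ω) ∂P ≤ √(∫ ω, f ω ∂P) * √(∫ ω, h ω ∂P) := by
  have integral_sqrt_sq {u : Ω → ℝ} (hu₀ : 0 ≤ᵐ[P] u) : ∫ ω, √(u ω) ^ 2 ∂P = ∫ ω, u ω ∂P :=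
    integral_congr_ae (hu₀.mono fun ω hω => sq_sqrt hω)
  have holder := integral_mul_le_Lp_mul_Lq_of_nonneg Real.HolderConjugate.two_two
    (ae_of_all P fun ω => sqrt_nonneg (f ω)) (ae_of_all P fun ω => sqrt_nonneg (h ω))
    (by simpa using memLp_two_sqrt hf) (by simpa using memLp_two_sqrt hh)
  simpa only [rpow_two, integral_sqrt_sq hf₀, integral_sqrt_sq hh₀, ← sqrt_eq_rpow,
    ← integral_congr_ae (sqrt_mul_ae_eq hf₀)] using holder

theorem hellingerAffinity_comm (p q : Ω → ℝ) :
    hellingerAffinity P p q = hellingerAffinity P q p := by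
  simp only [hellingerAffinity, mul_comm]

theorem IsProbDensity.hellingerAffinity_self (hp : IsProbDensity P p) :
    hellingerAffinity P p p = 1 :=
  (integral_congr_ae (hp.nonneg.mono fun _ hω => sqrt_mul_self hω)).trans hp.integral_eq_one

theorem hellingerAffinity_pos [NeZero P] (hp : Integrable p P) (hq : Integrable q P)
    (hp₀ : ∀ᵐ ω ∂P, 0 < p ω) (hq₀ : ∀ᵐ ω ∂P, 0 < q ω) : 0 < hellingerAffinity P p q := by
  have hint := integrable_sqrt_mul hp hq (hp₀.mono fun _ => le_of_lt)
  have hnonneg : 0 ≤ᵐ[P] fun ω => √(p ω * q ω) := ae_of_all P fun ω => sqrt_nonneg _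
  refine (integral_nonneg_of_ae hnonneg).lt_of_ne' fun hzero => ?_
  have hvanish := (integral_eq_zero_iff_of_nonneg_ae hnonneg hint).1 hzero
  obtain ⟨ω, hω, hpω, hqω⟩ := (hvanish.and (hp₀.and hq₀)).exists
  exact (sqrt_pos.2 (mul_pos hpω hqω)).ne' hω

theorem hellingerAffinity_le_sqrt_add_sqrt (hp : IsProbDensity P p) (hq : IsProbDensity P q)
    (hB : MeasurableSet B) :
    hellingerAffinity P p q ≤ √(∫ ω in B, p ω ∂P) + √(∫ ω in Bᶜ, q ω ∂P) := by
  have cauchy_schwarz (C : Set Ω) : ∫ ω in C, √(p ω * q ω) ∂P ≤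
      √(∫ ω in C, p ω ∂P) * √(∫ ω in C, q ω ∂P) :=
    integral_sqrt_mul_le hp.integrable.restrict hq.integrable.restrict
      (ae_restrict_of_ae hp.nonneg) (ae_restrict_of_ae hq.nonneg)
  calc hellingerAffinity P p q
      = ∫ ω in B, √(p ω * q ω) ∂P + ∫ ω in Bᶜ, √(p ω * q ω) ∂P :=
        (integral_add_compl hB (integrable_sqrt_mul hp.integrable hq.integrable hp.nonneg)).symm
    _ ≤ √(∫ ω in B, p ω ∂P) * √(∫ ω in B, q ω ∂P)
          + √(∫ ω in Bᶜ, p ω ∂P) * √(∫ ω in Bᶜ, q ω ∂P) :=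
        add_le_add (cauchy_schwarz B) (cauchy_schwarz Bᶜ)
    _ ≤ √(∫ ω in B, p ω ∂P) + √(∫ ω in Bᶜ, q ω ∂P) :=
        add_le_add
          (mul_le_of_le_one_right (sqrt_nonneg _) (sqrt_le_one.2 hq.setIntegral_le_one))
          (mul_le_of_le_one_left (sqrt_nonneg _) (sqrt_le_one.2 hp.setIntegral_le_one))

theorem setIntegral_le_of_hellingerAffinity (hp : IsProbDensity P p) (hq : IsProbDensity P q)
    (hB : MeasurableSet B) :
    ∫ ω in B, p ω ∂P ≤ 2 * (1 - hellingerAffinity P p q + √(∫ ω in B, q ω ∂P)) := by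
  have haff := hellingerAffinity_le_sqrt_add_sqrt hp hq hB.compl
  rw [compl_compl, hp.setIntegral_compl hB] at haff
  have hsqrt : √(1 + -∫ ω in B, p ω ∂P) ≤ 1 + -(∫ ω in B, p ω ∂P) / 2 :=
    sqrt_one_add_le (neg_le_neg hp.setIntegral_le_one)
  rw [← sub_eq_add_neg] at hsqrt
  linarith

theorem sub_le_two_mul_of_le_hellingerAffinity (hp : IsProbDensity P p) (hq : IsProbDensity P q)
    (hf : Measurable f) (hδ : 0 < δ) (hpq : δ ≤ hellingerAffinity P p q)
    (hpt : ∫ ω in {ω | t < |f ω - a|}, p ω ∂P < δ ^ 2 / 4)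
    (hqt : ∫ ω in {ω | t < |f ω - b|}, q ω ∂P < δ ^ 2 / 4) : a - b ≤ 2 * t := by
  by_contra! hsep
  have sqrt_lt_half {u : ℝ} (hu : u < δ ^ 2 / 4) : √u < δ / 2 :=
    (sqrt_lt' (half_pos hδ)).2 (hu.trans_eq (by ring))
  have hB : MeasurableSet {ω | t < |f ω - a|} :=
    measurableSet_lt measurable_const (hf.sub_const a).abs
  have hsub : {ω | t < |f ω - a|}ᶜ ⊆ {ω | t < |f ω - b|} := fun ω hω => by
    have hωa : |f ω - a| ≤ t := not_lt.1 hω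
    exact lt_of_lt_of_le (by linarith [(abs_le.1 hωa).1]) (le_abs_self (f ω - b))
  have hcompl : ∫ ω in {ω | t < |f ω - a|}ᶜ, q ω ∂P < δ ^ 2 / 4 :=
    (setIntegral_mono_set hq.integrable.integrableOn (ae_restrict_of_ae hq.nonneg)
      hsub.eventuallyLE).trans_lt hqt
  linarith [hellingerAffinity_le_sqrt_add_sqrt hp hq hB, sqrt_lt_half hpt, sqrt_lt_half hcompl]

theorem tendsto_setIntegral_lt_abs_atTop (hp : Integrable p P) (hf : Measurable f) :
    Tendsto (fun t : ℝ => ∫ ω in {ω | t < |f ω|}, p ω ∂P) atTop (𝓝 0) := by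
  have hempty : ⋂ t : ℝ, {ω | t < |f ω|} = ∅ :=
    eq_empty_of_forall_notMem fun ω hω => lt_irrefl |f ω| (mem_iInter.1 hω |f ω|)
  simpa only [hempty, setIntegral_empty] using tendsto_setIntegral_of_antitone
    (fun t : ℝ => measurableSet_lt measurable_const hf.abs)
    (fun s t hst ω (hω : t < |f ω|) => hst.trans_lt hω) ⟨0, hp.integrableOn⟩

theorem eventually_forall_setIntegral_lt_abs_lt {Y : Type*} [TopologicalSpace Y] {K : Set Y}
    (hK : IsCompact K) {p : Y → Ω → ℝ} (hp : ∀ y ∈ K, ∀ᶠ z in 𝓝 y, IsProbDensity P (p z))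
    (haff : ∀ y ∈ K, Tendsto (fun z => hellingerAffinity P (p z) (p y)) (𝓝 y) (𝓝 1))
    (hf : Measurable f) (hε : 0 < ε) :
    ∀ᶠ t in atTop, ∀ y ∈ K, ∫ ω in {ω | t < |f ω|}, p y ω ∂P < ε := by
  suffices hloc : ∀ y ∈ K, ∀ᶠ s : ℝ × Y in atTop ×ˢ 𝓝 y,
      ∫ ω in {ω | s.1 < |f ω|}, p s.2 ω ∂P < ε from
    (Eventually.curry (hK.mem_prod_nhdsSet_of_forall hloc)).mono
      fun _ => Eventually.self_of_nhdsSet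
  intro y hy
  have hpy := (hp y hy).self_of_nhds
  have hbound : Tendsto (fun s : ℝ × Y => 2 * (1 - hellingerAffinity P (p s.2) (p y)
      + √(∫ ω in {ω | s.1 < |f ω|}, p y ω ∂P))) (atTop ×ˢ 𝓝 y) (𝓝 0) := by
    have htail := ((tendsto_setIntegral_lt_abs_atTop hpy.integrable hf).comp
      (tendsto_fst (g := 𝓝 y))).sqrt
    simpa using ((((haff y hy).comp tendsto_snd).const_sub 1).add htail).const_mul 2
  filter_upwards [hbound.eventually_lt_const hε, tendsto_snd.eventually (hp y hy)] with s hs hps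
  exact (setIntegral_le_of_hellingerAffinity hps hpy
    (measurableSet_lt measurable_const hf.abs)).trans_lt hs

theorem two_mul_log_hellingerAffinity_le {φ : Ω → ℝ}
    (hp : Integrable (fun ω => exp (φ ω) * p ω) P) (hq : Integrable (fun ω => exp (-φ ω) * q ω) P)
    (hp₀ : 0 ≤ᵐ[P] p) (hq₀ : 0 ≤ᵐ[P] q) (hpq : 0 < hellingerAffinity P p q) :
    2 * log (hellingerAffinity P p q) ≤
      log (∫ ω, exp (φ ω) * p ω ∂P) + log (∫ ω, exp (-φ ω) * q ω ∂P) := by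
  have cauchy_schwarz := integral_sqrt_mul_le hp hq
    (hp₀.mono fun ω hω => mul_nonneg (exp_pos _).le hω)
    (hq₀.mono fun ω hω => mul_nonneg (exp_pos _).le hω)
  simp only [mul_mul_mul_comm (exp _) _ (exp _), ← exp_add, add_neg_cancel, exp_zero,
    one_mul] at cauchy_schwarz
  have hprod := hpq.trans_le cauchy_schwarz
  have hI : 0 < ∫ ω, exp (φ ω) * p ω ∂P := sqrt_pos.1 (pos_of_mul_pos_left hprod (sqrt_nonneg _))
  have hJ : 0 < ∫ ω, exp (-φ ω) * q ω ∂P := sqrt_pos.1 (pos_of_mul_pos_right hprod (sqrt_nonneg _))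
  have hlog := log_le_log hpq cauchy_schwarz
  rw [log_mul (sqrt_pos.2 hI).ne' (sqrt_pos.2 hJ).ne', log_sqrt hI.le, log_sqrt hJ.le] at hlog
  linarith

end HellingerAffinity

namespace GoodPair

open Filter Topology

variable (D : GoodPair Ω P E) {μ ν : E}

/-- The Hellinger affinity of the densities with parameters `μ` and `ν`. -/
noncomputable abbrev affinity (μ ν : E) : ℝ := hellingerAffinity P (D.p μ) (D.p ν)

/-- Half the log-likelihood ratio `½ ln (p_ν / p_μ)`, the exponential tilt that carries `p_μ` to
the geometric mean `√(p_μ p_ν)`. -/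
noncomputable def halfLogRatio (μ ν : E) : Ω → ℝ := fun ω => log (D.p ν ω / D.p μ ω) / 2

theorem isProbDensity (hμ : μ ∈ D.M) : IsProbDensity P (D.p μ) :=
  ⟨ae_of_all P fun ω => (D.p_pos μ hμ ω).le, D.p_prob μ hμ⟩

theorem affinity_pos (hμ : μ ∈ D.M) (hν : ν ∈ D.M) : 0 < D.affinity μ ν := by
  have : NeZero P := ⟨by rintro rfl; simpa using D.p_prob μ hμ⟩
  exact hellingerAffinity_pos (D.isProbDensity hμ).integrable (D.isProbDensity hν).integrable
    (ae_of_all P (D.p_pos μ hμ)) (ae_of_all P (D.p_pos ν hν))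

theorem halfLogRatio_mem (hμ : μ ∈ D.M) (hν : ν ∈ D.M) : D.halfLogRatio μ ν ∈ D.F := by
  convert D.F.smul_mem 2⁻¹ (D.logratio_mem ν hν μ hμ) using 1
  exact funext fun ω => div_eq_inv_mul _ _

theorem integral_exp_halfLogRatio (hμ : μ ∈ D.M) (hν : ν ∈ D.M) :
    ∫ ω, exp (D.halfLogRatio μ ν ω) * D.p μ ω ∂P = D.affinity μ ν :=
  integral_congr_ae (ae_of_all P fun ω => exp_half_log_div_mul (D.p_pos μ hμ ω) (D.p_pos ν hν ω))

theorem integral_exp_neg_halfLogRatio (hμ : μ ∈ D.M) (hν : ν ∈ D.M) :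
    ∫ ω, exp (-D.halfLogRatio μ ν ω) * D.p ν ω ∂P = D.affinity μ ν := by
  have neg_halfLogRatio (ω : Ω) : -D.halfLogRatio μ ν ω = D.halfLogRatio ν μ ω := by
    simp only [halfLogRatio, ← neg_div, ← log_inv, inv_div]
  simp only [neg_halfLogRatio, D.integral_exp_halfLogRatio hν hμ, affinity, hellingerAffinity_comm]

theorem two_mul_log_affinity_le {φ : Ω → ℝ} (hφ : φ ∈ D.F) (hμ : μ ∈ D.M) (hν : ν ∈ D.M) :
    2 * log (D.affinity μ ν) ≤
      log (∫ ω, exp (φ ω) * D.p μ ω ∂P) + log (∫ ω, exp (-φ ω) * D.p ν ω ∂P) :=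
  two_mul_log_hellingerAffinity_le (D.F_finite φ hφ μ hμ) (D.F_finite _ (D.F.neg_mem hφ) ν hν)
    (D.isProbDensity hμ).nonneg (D.isProbDensity hν).nonneg (D.affinity_pos hμ hν)

theorem concaveOn_log_affinity (hν : ν ∈ D.M) :
    ConcaveOn ℝ D.M fun μ => log (D.affinity μ ν) := by
  refine ⟨D.M_convex, fun μ₁ h₁ μ₂ h₂ a b ha hb hab => ?_⟩
  have hμ := D.M_convex h₁ h₂ ha hb hab
  set μ := a • μ₁ + b • μ₂
  -- For the tilt that is optimal at `μ`, the upper bound `two_mul_log_affinity_le` is concave in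
  -- the first parameter and is attained at `μ`.
  have hφ := D.halfLogRatio_mem hμ hν
  have hconc := (D.F_concave _ hφ).2 h₁ h₂ ha hb hab
  have le₁ := D.two_mul_log_affinity_le hφ h₁ hν
  have le₂ := D.two_mul_log_affinity_le hφ h₂ hν
  rw [D.integral_exp_neg_halfLogRatio hμ hν] at le₁ le₂
  simp only [smul_eq_mul] at hconc ⊢
  rw [D.integral_exp_halfLogRatio hμ hν] at hconc
  have hab_log : (a + b) * log (D.affinity μ ν) = log (D.affinity μ ν) := by rw [hab, one_mul]
  linarith [mul_le_mul_of_nonneg_left le₁ ha, mul_le_mul_of_nonneg_left le₂ hb]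

section AffineParametrization

variable {V : Type*} [NormedAddCommGroup V] [NormedSpace ℝ V] [FiniteDimensional ℝ V]
  (A : V →ᵃ[ℝ] E)

theorem isOpen_preimage_M : IsOpen (A ⁻¹' D.M) :=
  D.M_open.preimage A.continuous_of_finiteDimensional

theorem continuousOn_affinity_comp (hν : ν ∈ D.M) :
    ContinuousOn (fun x => D.affinity (A x) ν) (A ⁻¹' D.M) :=
  (((D.concaveOn_log_affinity hν).comp_affineMap A).continuousOn (D.isOpen_preimage_M A)).rexp.congr
    fun _ hx => (exp_log (D.affinity_pos hx hν)).symm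

end AffineParametrization

theorem obsMeasure_apply (hμ : μ ∈ D.M) {B : Set Ω} (hB : MeasurableSet B) :
    obsMeasure D μ B = ENNReal.ofReal (∫ ω in B, D.p μ ω ∂P) := by
  have hp := D.isProbDensity hμ
  rw [obsMeasure, withDensity_apply _ hB,
    ofReal_integral_eq_lintegral_ofReal hp.integrable.restrict (ae_restrict_of_ae hp.nonneg)]

section Risk

variable (A : (Fin n → ℝ) →ᵃ[ℝ] E) (g : Fin n → ℝ) (X : Set (Fin n → ℝ)) {f : Ω → ℝ}
  {δ ε t : ℝ} {x y : Fin n → ℝ}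

/-- The error levels that the estimate `f` exceeds with probability less than `ε`, uniformly over
`X`. Their infimum is `Risk`. -/
def admissibleErrors (f : Ω → ℝ) (ε : ℝ) : Set ℝ :=
  {t | (⨆ x ∈ X, obsMeasure D (A x) {ω | t < |f ω - g ⬝ᵥ x|}) < ENNReal.ofReal ε}

variable {A g X}

theorem setIntegral_lt_of_mem_admissibleErrors (hA : ∀ x ∈ X, A x ∈ D.M) (hf : Measurable f)
    (ht : t ∈ D.admissibleErrors A g X f ε) (hx : x ∈ X) :
    ∫ ω in {ω | t < |f ω - g ⬝ᵥ x|}, D.p (A x) ω ∂P < ε := by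
  have hlt : obsMeasure D (A x) {ω | t < |f ω - g ⬝ᵥ x|} < ENNReal.ofReal ε :=
    lt_of_le_of_lt (le_iSup₂_of_le x hx le_rfl) ht
  rw [D.obsMeasure_apply (hA x hx) (measurableSet_lt measurable_const (hf.sub_const _).abs)] at hlt
  exact (ENNReal.ofReal_lt_ofReal_iff'.1 hlt).1

theorem eventually_forall_setIntegral_lt (hX : IsCompact X) (hA : ∀ x ∈ X, A x ∈ D.M)
    (hf : Measurable f) (hε : 0 < ε) :
    ∀ᶠ t in atTop, ∀ x ∈ X, ∫ ω in {ω | t < |f ω|}, D.p (A x) ω ∂P < ε := by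
  have hnhds (x) (hx : x ∈ X) : ∀ᶠ z in 𝓝 x, A z ∈ D.M :=
    (D.isOpen_preimage_M A).mem_nhds (hA x hx)
  refine eventually_forall_setIntegral_lt_abs_lt hX
    (fun x hx => (hnhds x hx).mono fun _ hz => D.isProbDensity hz) (fun x hx => ?_) hf hε
  have hcont := (D.continuousOn_affinity_comp A (hA x hx)).continuousAt (hnhds x hx)
  simpa only [ContinuousAt, (D.isProbDensity (hA x hx)).hellingerAffinity_self] using hcont

theorem admissibleErrors_nonempty (hX : IsCompact X) (hA : ∀ x ∈ X, A x ∈ D.M)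
    (hf : Measurable f) (hε : 0 < ε) : (D.admissibleErrors A g X f ε).Nonempty := by
  obtain ⟨t, ht⟩ := (D.eventually_forall_setIntegral_lt hX hA hf (half_pos hε)).exists
  obtain ⟨C, hC⟩ := hX.exists_bound_of_continuousOn (f := fun x => g ⬝ᵥ x)
    (by unfold dotProduct; fun_prop)
  refine ⟨t + C, (iSup₂_le fun x hx => ?_).trans_lt
    ((ENNReal.ofReal_lt_ofReal_iff hε).2 (half_lt_self hε))⟩
  have hsub : {ω | t + C < |f ω - g ⬝ᵥ x|} ⊆ {ω | t < |f ω|} := fun ω hω => by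
    have hω' : t + C < |f ω - g ⬝ᵥ x| := hω
    have hCx : |g ⬝ᵥ x| ≤ C := hC x hx
    exact show t < |f ω| by linarith [abs_sub (f ω) (g ⬝ᵥ x)]
  calc obsMeasure D (A x) {ω | t + C < |f ω - g ⬝ᵥ x|}
      ≤ obsMeasure D (A x) {ω | t < |f ω|} := measure_mono hsub
    _ = ENNReal.ofReal (∫ ω in {ω | t < |f ω|}, D.p (A x) ω ∂P) :=
        D.obsMeasure_apply (hA x hx) (measurableSet_lt measurable_const hf.abs)
    _ ≤ ENNReal.ofReal (ε / 2) := ENNReal.ofReal_le_ofReal (ht x hx).le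

theorem sub_le_two_mul_riskStar (hX : IsCompact X) (hA : ∀ x ∈ X, A x ∈ D.M) (hδ : 0 < δ)
    (hx : x ∈ X) (hy : y ∈ X) (hxy : δ ≤ D.affinity (A x) (A y)) :
    g ⬝ᵥ x - g ⬝ᵥ y ≤ 2 * RiskStar D A g X (δ ^ 2 / 4) := by
  suffices h : (g ⬝ᵥ x - g ⬝ᵥ y) / 2 ≤ RiskStar D A g X (δ ^ 2 / 4) by linarith
  refine le_csInf ⟨_, 0, measurable_const, rfl⟩ ?_
  rintro _ ⟨f, hf, rfl⟩
  refine le_csInf (D.admissibleErrors_nonempty hX hA hf (by positivity)) fun t ht => ?_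
  have hsub := sub_le_two_mul_of_le_hellingerAffinity (D.isProbDensity (hA x hx))
    (D.isProbDensity (hA y hy)) hf hδ hxy
    (D.setIntegral_lt_of_mem_admissibleErrors hA hf ht hx)
    (D.setIntegral_lt_of_mem_admissibleErrors hA hf ht hy)
  linarith

end Risk

section PhiFun

variable (A : (Fin n → ℝ) →ᵃ[ℝ] E) (g : Fin n → ℝ) (r : ℝ) {x y : Fin n → ℝ}

/-- The values of `Φ_r(x, y; ·, ·)`, whose infimum enters `2Φ_*(r)`. -/
def phiValues (x y : Fin n → ℝ) : Set ℝ :=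
  {w | ∃ φ ∈ D.F, ∃ α : ℝ, 0 < α ∧ w = PhiFun D A g r x y φ α}

variable {A}

theorem isLeast_image_phiFun (hx : A x ∈ D.M) (hy : A y ∈ D.M) {α : ℝ} (hα : 0 < α) :
    IsLeast ((PhiFun D A g r x y · α) '' D.F)
      (g ⬝ᵥ x - g ⬝ᵥ y + α * (2 * (log (D.affinity (A x) (A y)) + r))) := by
  rw [affinity, hellingerAffinity_comm]
  constructor
  · refine ⟨_, D.F.smul_mem α (D.halfLogRatio_mem hy hx), ?_⟩
    simp only [PhiFun, Pi.smul_apply, smul_eq_mul, neg_div, mul_div_cancel_left₀ _ hα.ne',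
      D.integral_exp_halfLogRatio hy hx, D.integral_exp_neg_halfLogRatio hy hx]
    ring
  · rintro _ ⟨φ, hφ, rfl⟩
    have hφα : (fun ω => φ ω / α) ∈ D.F := by
      simp only [div_eq_inv_mul]
      exact D.F.smul_mem α⁻¹ hφ
    have hle := mul_le_mul_of_nonneg_left (D.two_mul_log_affinity_le hφα hy hx) hα.le
    simp only [PhiFun, neg_div]
    linarith

theorem lowerBounds_phiValues (hx : A x ∈ D.M) (hy : A y ∈ D.M) :
    lowerBounds (D.phiValues A g r x y) = lowerBounds
      ((fun α => g ⬝ᵥ x - g ⬝ᵥ y + α * (2 * (log (D.affinity (A x) (A y)) + r))) '' Ioi 0) := by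
  ext b
  constructor
  · rintro hb _ ⟨α, hα, rfl⟩
    obtain ⟨φ, hφ, hφα⟩ := (D.isLeast_image_phiFun g r hx hy hα).1
    exact hb ⟨φ, hφ, α, hα, hφα.symm⟩
  · rintro hb _ ⟨φ, hφ, α, hα, rfl⟩
    exact (hb ⟨α, hα, rfl⟩).trans ((D.isLeast_image_phiFun g r hx hy hα).2 ⟨φ, hφ, rfl⟩)

theorem sInf_phiValues_of_exp_neg_le (hx : A x ∈ D.M) (hy : A y ∈ D.M)
    (hr : exp (-r) ≤ D.affinity (A x) (A y)) :
    sInf (D.phiValues A g r x y) = g ⬝ᵥ x - g ⬝ᵥ y := by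
  have hlog := (le_log_iff_exp_le (D.affinity_pos hx hy)).2 hr
  have hglb : IsGLB (D.phiValues A g r x y) (g ⬝ᵥ x - g ⬝ᵥ y) :=
    (isGLB_congr (D.lowerBounds_phiValues g r hx hy)).2 (isGLB_image_add_mul_Ioi (by linarith))
  exact hglb.csInf_eq ⟨_, 0, D.F.zero_mem, 1, one_pos, rfl⟩

/-- The infimum is really `-∞` here; `sInf` reports it as `0`. -/
theorem sInf_phiValues_of_lt_exp_neg (hx : A x ∈ D.M) (hy : A y ∈ D.M)
    (hr : D.affinity (A x) (A y) < exp (-r)) : sInf (D.phiValues A g r x y) = 0 := by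
  have hlog := (log_lt_iff_lt_exp (D.affinity_pos hx hy)).2 hr
  refine Real.sInf_of_not_bddBelow ?_
  rw [BddBelow, D.lowerBounds_phiValues g r hx hy]
  exact not_bddBelow_image_add_mul_Ioi _ (by linarith)

end PhiFun

end GoodPair

theorem riskStar_ge_phiStar_general (D : GoodPair Ω P E) {X : Set (Fin n → ℝ)} (hXne : X.Nonempty)
    (hX : IsCompact X) {A : (Fin n → ℝ) →ᵃ[ℝ] E} (hA : ∀ x ∈ X, A x ∈ D.M) (g : Fin n → ℝ)
    {δ : ℝ} (hδ : δ ∈ Ioc (0 : ℝ) 1) :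
    PhiStarSI D A g X (log (1 / δ)) ≤ RiskStar D A g X (δ ^ 2 / 4) := by
  obtain ⟨hδ₀, hδ₁⟩ := hδ
  have hexp : exp (-log (1 / δ)) = δ := by rw [one_div, log_inv, neg_neg, exp_log hδ₀]
  obtain ⟨x₀, hx₀⟩ := hXne
  suffices h : sSup {v : ℝ | ∃ x ∈ X, ∃ y ∈ X, v = sInf (D.phiValues A g (log (1 / δ)) x y)} ≤
      2 * RiskStar D A g X (δ ^ 2 / 4) from by
    rw [PhiStarSI]
    exact (mul_le_mul_of_nonneg_left h (by norm_num)).trans_eq (by ring)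
  refine csSup_le ⟨_, x₀, hx₀, x₀, hx₀, rfl⟩ ?_
  rintro _ ⟨x, hx, y, hy, rfl⟩
  rcases le_or_gt δ (D.affinity (A x) (A y)) with hxy | hxy
  · rw [D.sInf_phiValues_of_exp_neg_le g _ (hA x hx) (hA y hy) (hexp.trans_le hxy)]
    exact D.sub_le_two_mul_riskStar hX hA hδ₀ hx hy hxy
  · rw [D.sInf_phiValues_of_lt_exp_neg g _ (hA x hx) (hA y hy) (hxy.trans_eq hexp.symm),
      ← sub_self (g ⬝ᵥ x)]
    exact D.sub_le_two_mul_riskStar hX hA hδ₀ hx hx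
      (hδ₁.trans_eq (D.isProbDensity (hA x hx)).hellingerAffinity_self.symm)

/-- **Lemma 3.2, inequality (3.2).** For every `δ ∈ (0,1)`, the minimax optimal
risk satisfies `Risk_*(δ²/4) ≥ Φ_*(ln(1/δ))`, where
`2Φ_*(r) = sup_{x,y∈X} inf_{φ∈F, α>0} Φ_r(x,y;φ,α)`. -/
theorem riskStar_ge_phiStar
    {Ω : Type*} [MeasurableSpace Ω] [TopologicalSpace Ω] [PolishSpace Ω] [BorelSpace Ω]
    {P : Measure Ω} [SigmaFinite P] {m n : ℕ}
    (D : GoodPair Ω P (Fin m → ℝ))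
    (X : Set (Fin n → ℝ)) (hXne : X.Nonempty) (hXcp : IsCompact X) (hXcv : Convex ℝ X)
    (A : (Fin n → ℝ) →ᵃ[ℝ] (Fin m → ℝ)) (hA : ∀ x ∈ X, A x ∈ D.M)
    (g : Fin n → ℝ) (δ : ℝ) (hδ : δ ∈ Set.Ioo (0 : ℝ) 1) :
    PhiStarSI D A g X (Real.log (1 / δ)) ≤ RiskStar D A g X (δ ^ 2 / 4) :=
  riskStar_ge_phiStar_general D hXne hXcp hA g (Ioo_subset_Ioc_self hδ)
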